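/- (Délange–Ikehara Tauberian theorem, as used) Suppose f(s) = ∑_{n=1}^∞ a_n n^{−s} is a Dirichlet series with nonnegative coefficients, convergent for Re(s) > a > 0, and that in its domain of convergence f(s) = g(s)(s−a)^{−w} + h(s), where g and h are holomorphic in the closed half-plane Re(s) ≥ a, g(a) ≠ 0, and w > 0. Then ∑_{n ≤ X} a_n ∼ (g(a)/(a·Γ(w)))·X^a·(log X)^{w−1} as X → ∞. -/

import Mathlib

open Filter

/-!
A Dirichlet series is the Laplace transform of the measure `ν = ∑ a n δ_{log n}`, whose distribution
function `ν (-∞, x]` is the partial sum up to `exp x`.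

Smooth `ν` with a kernel `K > 0` whose Fourier transform is smooth and compactly supported. After
tilting by `exp (-(A + 1 / x) * u)`, the smoothed measure at `x` is a Fourier integral of
`g s * (s - A) ^ (-w) + h s` over a bounded segment of the line `Re s = A + 1 / x`. Integration by
parts makes the contribution of `h` negligible, while rescaling by `x` turns the main term into the
inverse Fourier transform of `(1 - 2πiv) ^ (-w)`, that is, into the density of a Gamma distribution
at `1`: this is where `Γ w` comes from. Modulating `K` gives the limits of the characteristic
functions, so by Lévy's continuity theorem the mass of `ν` near `x`, suitably normalized and
weighted by `K`, converges weakly to a multiple of Lebesgue measure weighted by `K`. As `K` can be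
chosen to decay more slowly than `exp (-A * |y|)`, the weak limit may be tested against
`exp (-A * y) / K y` on `[0, ∞)`, which recovers `ν (-∞, x]`.
-/

namespace DelangeIkehara

open MeasureTheory Set
open scoped Real FourierTransform Topology ContDiff

/-! ### Vertical lines -/

/-- The point `σ - 2πit`, parametrizing the vertical line of abscissa `σ`. The factor `-2π` makes
the Laplace kernel `e^{-zu}` at this point equal to `e^{-σu} e^{2πitu}`, which matches the
normalization of the Fourier transform `𝓕`. -/
noncomputable def verticalLine (σ t : ℝ) : ℂ := σ - 2 * π * t * Complex.I

@[simp]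
lemma verticalLine_re (σ t : ℝ) : (verticalLine σ t).re = σ := by simp [verticalLine]

@[simp]
lemma verticalLine_im (σ t : ℝ) : (verticalLine σ t).im = -(2 * π * t) := by simp [verticalLine]

lemma continuous_verticalLine (σ : ℝ) : Continuous (verticalLine σ) := by
  unfold verticalLine
  fun_prop

lemma hasDerivAt_verticalLine (σ t : ℝ) :
    HasDerivAt (verticalLine σ) (-(2 * π * Complex.I)) t := by
  have h := ((Complex.ofRealCLM.hasDerivAt (x := t)).const_mul (2 * π : ℂ)).mul_const Complex.I
  change HasDerivAt (fun s : ℝ ↦ (σ - 2 * π * s * Complex.I : ℂ)) _ t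
  simpa using h.const_sub (σ : ℂ)

lemma verticalLine_mem_slitPlane {σ : ℝ} (hσ : 0 < σ) (t : ℝ) :
    verticalLine σ t ∈ Complex.slitPlane :=
  .inl (by simpa using hσ)

lemma inv_mul_verticalLine_one (x v : ℝ) :
    (x⁻¹ : ℝ) * verticalLine 1 v = verticalLine x⁻¹ (x⁻¹ * v) := by
  simp only [verticalLine, Complex.ofReal_mul, Complex.ofReal_one]
  ring

lemma norm_verticalLine_one_cpow (b v : ℝ) :
    ‖verticalLine 1 v ^ (b : ℂ)‖ = (1 + ‖2 * π * v‖ ^ 2) ^ (b / 2) := by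
  have hnorm : ‖verticalLine 1 v‖ = √(1 + ‖2 * π * v‖ ^ 2) := by
    rw [Complex.norm_eq_sqrt_sq_add_sq, verticalLine_re, verticalLine_im, neg_sq, one_pow,
      Real.norm_eq_abs, sq_abs]
  rw [Complex.norm_cpow_real, hnorm, Real.sqrt_eq_rpow, ← Real.rpow_mul (by positivity)]
  ring_nf

lemma continuous_verticalLine_cpow {σ : ℝ} (hσ : 0 < σ) (b : ℂ) :
    Continuous fun v ↦ verticalLine σ v ^ b :=
  (continuous_verticalLine σ).cpow continuous_const (verticalLine_mem_slitPlane hσ)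

lemma integrable_verticalLine_one_cpow_neg {b : ℝ} (hb : 1 < b) :
    Integrable fun v ↦ verticalLine 1 v ^ (-b : ℂ) := by
  have hbound : Integrable fun v : ℝ ↦ (1 + ‖2 * π * v‖ ^ 2) ^ (-b / 2) :=
    (integrable_rpow_neg_one_add_norm_sq (E := ℝ) (μ := volume) (by simpa using hb)).comp_mul_left'
      (by positivity)
  refine hbound.mono' (continuous_verticalLine_cpow one_pos _).aestronglyMeasurable
    (.of_forall fun v ↦ ?_)
  rw [← Complex.ofReal_neg, norm_verticalLine_one_cpow]

/-! ### The characteristic function of the Gamma distribution -/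

section Gamma

open ProbabilityTheory

variable {a r : ℝ}

lemma exp_mul_gammaPDFReal (hr : 0 < r) {t : ℝ} (ht : t < r) (x : ℝ) :
    Real.exp (t * x) * gammaPDFReal a r x = (r / (r - t)) ^ a * gammaPDFReal a (r - t) x := by
  have hrt : 0 < r - t := sub_pos.2 ht
  unfold gammaPDFReal
  split_ifs
  · have hexp : Real.exp (-((r - t) * x)) = Real.exp (t * x) * Real.exp (-(r * x)) := by
      rw [← Real.exp_add]
      ring_nf
    rw [hexp, Real.div_rpow hr.le hrt.le]
    field_simp
  · simp

lemma integrable_gammaPDFReal (ha : 0 < a) (hr : 0 < r) : Integrable (gammaPDFReal a r) := by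
  refine ⟨(measurable_gammaPDFReal a r).aestronglyMeasurable, ?_⟩
  rw [hasFiniteIntegral_iff_ofReal (.of_forall (gammaPDFReal_nonneg ha hr))]
  exact (lintegral_gammaPDF_eq_one ha hr).trans_lt ENNReal.one_lt_top

lemma integral_gammaPDFReal (ha : 0 < a) (hr : 0 < r) : ∫ x, gammaPDFReal a r x = 1 := by
  rw [integral_eq_lintegral_of_nonneg_ae (.of_forall (gammaPDFReal_nonneg ha hr))
    (measurable_gammaPDFReal a r).aestronglyMeasurable]
  exact congrArg ENNReal.toReal (lintegral_gammaPDF_eq_one ha hr)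

lemma integral_gammaMeasure {E : Type*} [NormedAddCommGroup E] [NormedSpace ℝ E]
    (ha : 0 < a) (hr : 0 < r) (f : ℝ → E) :
    ∫ x, f x ∂gammaMeasure a r = ∫ x, gammaPDFReal a r x • f x := by
  rw [gammaMeasure, integral_withDensity_eq_integral_toReal_smul (f := gammaPDF a r)
    (measurable_gammaPDFReal a r).ennreal_ofReal (.of_forall fun _ ↦ ENNReal.ofReal_lt_top)]
  exact integral_congr_ae (.of_forall fun x ↦ congrArg (· • f x)
    (ENNReal.toReal_ofReal (gammaPDFReal_nonneg ha hr x)))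

lemma mgf_id_gammaMeasure (ha : 0 < a) (hr : 0 < r) {t : ℝ} (ht : t < r) :
    mgf id (gammaMeasure a r) t = (r / (r - t)) ^ a := by
  simp only [mgf, id, integral_gammaMeasure ha hr, smul_eq_mul, mul_comm (gammaPDFReal a r _),
    exp_mul_gammaPDFReal hr ht, integral_const_mul, integral_gammaPDFReal ha (sub_pos.2 ht),
    mul_one]

lemma Iio_subset_interior_integrableExpSet_gammaMeasure (ha : 0 < a) (hr : 0 < r) :
    Iio r ⊆ interior (integrableExpSet id (gammaMeasure a r)) := by
  refine interior_maximal (fun t ht ↦ ?_) isOpen_Iio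
  have := isProbabilityMeasure_gammaMeasure ha hr
  refine mgf_pos_iff.1 ?_
  rw [mgf_id_gammaMeasure ha hr ht]
  exact Real.rpow_pos_of_pos (div_pos hr (sub_pos.2 ht)) a

lemma complexMGF_id_gammaMeasure (ha : 0 < a) (hr : 0 < r) {z : ℂ} (hz : z.re < r) :
    complexMGF id (gammaMeasure a r) z = (r / (r - z)) ^ (a : ℂ) := by
  have hsub {y : ℂ} (hy : y.re < r) : (r - y : ℂ) ∈ Complex.slitPlane := .inl (by simpa using hy)
  have hdiv {y : ℂ} (hy : y.re < r) : (r / (r - y) : ℂ) ∈ Complex.slitPlane := by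
    rw [div_eq_mul_inv]
    refine .inl ?_
    rw [Complex.re_ofReal_mul, Complex.inv_re, Complex.sub_re, Complex.ofReal_re]
    exact mul_pos hr (div_pos (sub_pos.2 hy)
      (Complex.normSq_pos.2 (Complex.slitPlane_ne_zero (hsub hy))))
  have hleft : AnalyticOnNhd ℂ (complexMGF id (gammaMeasure a r)) {y | y.re < r} := fun y hy ↦
    analyticAt_complexMGF (Iio_subset_interior_integrableExpSet_gammaMeasure ha hr hy)
  have hright : AnalyticOnNhd ℂ (fun y : ℂ ↦ (r / (r - y)) ^ (a : ℂ)) {y | y.re < r} :=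
    fun y hy ↦ (analyticAt_const.div (analyticAt_const.sub analyticAt_id)
      (Complex.slitPlane_ne_zero (hsub hy))).cpow analyticAt_const (hdiv hy)
  refine hleft.eqOn_of_preconnected_of_frequently_eq hright
    (convex_halfSpace_re_lt r).isPreconnected (z₀ := 0) (by simpa using hr) ?_ hz
  have hreal : ∀ᶠ t : ℝ in 𝓝[≠] 0,
      complexMGF id (gammaMeasure a r) t = (r / (r - t) : ℂ) ^ (a : ℂ) := by
    filter_upwards [nhdsWithin_le_nhds (Iio_mem_nhds hr)] with t ht
    rw [complexMGF_ofReal, mgf_id_gammaMeasure ha hr ht,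
      Complex.ofReal_cpow (div_pos hr (sub_pos.2 ht)).le]
    push_cast
    rfl
  have hlim : Tendsto ((↑) : ℝ → ℂ) (𝓝[≠] 0) (𝓝[≠] 0) :=
    Complex.continuous_ofReal.continuousAt.continuousWithinAt.tendsto_nhdsWithin
      fun t ht ↦ by simpa using ht
  exact hlim.frequently hreal.frequently

lemma fourier_gammaPDFReal_one (ha : 0 < a) :
    𝓕 (fun x ↦ (gammaPDFReal a 1 x : ℂ)) = fun ξ ↦ verticalLine 1 (-ξ) ^ (-a : ℂ) := by
  ext ξ
  have h := complexMGF_id_gammaMeasure ha one_pos (z := 1 - verticalLine 1 (-ξ)) (by simp)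
  have hslit := verticalLine_mem_slitPlane one_pos (-ξ)
  rw [Complex.ofReal_one, sub_sub_cancel, one_div,
    Complex.inv_cpow _ _ (Complex.slitPlane_arg_ne_pi hslit), ← Complex.cpow_neg] at h
  rw [← h, complexMGF, integral_gammaMeasure ha one_pos, Real.fourier_real_eq_integral_exp_smul]
  refine integral_congr_ae (.of_forall fun x ↦ ?_)
  simp only [smul_eq_mul, Complex.real_smul, verticalLine, id]
  rw [mul_comm]
  push_cast
  ring_nf

lemma fourier_verticalLine_one_cpow_neg {b : ℝ} (hb : 1 < b) :
    𝓕 (fun v ↦ verticalLine 1 v ^ (-b : ℂ)) 1 = (Real.exp (-1) / Real.Gamma b : ℝ) := by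
  have hb0 : 0 < b := one_pos.trans hb
  have hFourier := fourier_gammaPDFReal_one hb0
  have hint : Integrable (𝓕 fun x ↦ (gammaPDFReal b 1 x : ℂ)) := by
    rw [hFourier]
    exact (integrable_verticalLine_one_cpow_neg hb).comp_neg
  have hcont : ContinuousAt (fun x ↦ (gammaPDFReal b 1 x : ℂ)) 1 := by
    have heq : gammaPDFReal b 1 =ᶠ[𝓝 1] fun x ↦
        1 ^ b / Real.Gamma b * x ^ (b - 1) * Real.exp (-(1 * x)) := by
      filter_upwards [Ici_mem_nhds one_pos] with x hx using if_pos hx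
    have : ContinuousAt (gammaPDFReal b 1) 1 :=
      ((continuousAt_const.mul (Real.continuousAt_rpow_const _ _ (.inl one_ne_zero))).mul
        (by fun_prop)).congr heq.symm
    exact Complex.continuous_ofReal.continuousAt.comp this
  have hinv := (integrable_gammaPDFReal hb0 one_pos).ofReal.fourierInv_fourier_eq hint hcont
  rw [hFourier, Real.fourierInv_eq_fourier_comp_neg] at hinv
  simp only [neg_neg] at hinv
  rw [hinv]
  simp [gammaPDFReal, div_eq_inv_mul]

end Gamma

/-! ### Fourier transforms along vertical lines -/

/-- The closed right half-plane. -/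
abbrev rightHalfPlane : Set ℂ := {z | 0 ≤ z.re}

/-- The derivative of `Q` in the direction of `t ↦ verticalLine σ t`, one-sided on the boundary of
the closed right half-plane. -/
noncomputable def verticalDeriv (Q : ℂ → ℂ) (z : ℂ) : ℂ :=
  fderivWithin ℝ Q rightHalfPlane z (-(2 * π * Complex.I))

/-- The function `E` for which `E z * z ^ (-(w + 1))` is the derivative of `Q z * z ^ (-w)` along
vertical lines. -/
noncomputable def mulCpowVerticalDeriv (w : ℝ) (Q : ℂ → ℂ) (z : ℂ) : ℂ :=
  verticalDeriv Q z * z + 2 * π * Complex.I * w * Q z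

section VerticalLine

variable {Q : ℂ → ℂ} {T : ℝ}

lemma uniqueDiffOn_setOf_le_re (c : ℝ) : UniqueDiffOn ℝ {z : ℂ | c ≤ z.re} := by
  refine uniqueDiffOn_convex (convex_halfSpace_re_ge c) ⟨(c + 1 : ℝ), ?_⟩
  rw [Complex.interior_setOfPred_le_re]
  simp

lemma continuousOn_verticalDeriv (hQ : ContDiffOn ℝ 1 Q rightHalfPlane) :
    ContinuousOn (verticalDeriv Q) rightHalfPlane :=
  (hQ.continuousOn_fderivWithin (uniqueDiffOn_setOf_le_re 0) le_rfl).clm_apply continuousOn_const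

lemma verticalDeriv_eq_zero (hvanish : ∀ z, T < |z.im| → Q z = 0) {z : ℂ} (hz : T < |z.im|) :
    verticalDeriv Q z = 0 := by
  have hlocal : Q =ᶠ[𝓝 z] fun _ ↦ 0 := by
    filter_upwards [(isOpen_lt continuous_const Complex.continuous_im.abs).mem_nhds hz]
      using hvanish
  rw [verticalDeriv, (hlocal.filter_mono nhdsWithin_le_nhds).fderivWithin_eq (hvanish z hz)]
  simp

lemma hasDerivAt_comp_verticalLine (hQ : ContDiffOn ℝ 1 Q rightHalfPlane) {σ : ℝ} (hσ : 0 < σ)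
    (t : ℝ) :
    HasDerivAt (fun s ↦ Q (verticalLine σ s)) (verticalDeriv Q (verticalLine σ t)) t := by
  have hmem : rightHalfPlane ∈ 𝓝 (verticalLine σ t) :=
    mem_of_superset ((isOpen_lt continuous_const Complex.continuous_re).mem_nhds
      (show 0 < (verticalLine σ t).re by simpa using hσ))
      (ofPred_subset_ofPred.2 fun _ ↦ le_of_lt)
  have hdiff := ((hQ.differentiableOn one_ne_zero) _ (mem_of_mem_nhds hmem)).hasFDerivWithinAt
  exact (hdiff.hasFDerivAt hmem).comp_hasDerivAt t (hasDerivAt_verticalLine σ t)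

lemma exists_norm_le_of_vanishing (hQ : ContinuousOn Q rightHalfPlane)
    (hvanish : ∀ z, T < |z.im| → Q z = 0) :
    ∃ M, ∀ z : ℂ, z.re ∈ Icc 0 1 → ‖Q z‖ ≤ M := by
  obtain ⟨M, hM⟩ := (isCompact_Icc.reProdIm isCompact_Icc).exists_bound_of_continuousOn
    (s := Icc 0 1 ×ℂ Icc (-T) T) (hQ.mono fun z hz ↦ hz.1.1)
  refine ⟨max M 0, fun z hz ↦ ?_⟩
  by_cases him : |z.im| ≤ T
  · exact (hM z ⟨hz, abs_le.1 him⟩).trans (le_max_left _ _)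
  · simp [hvanish z (not_le.1 him)]

lemma vanishing_comp_verticalLine (hvanish : ∀ z, T < |z.im| → Q z = 0) {σ t : ℝ}
    (ht : t ∉ Icc (-(T / (2 * π))) (T / (2 * π))) : Q (verticalLine σ t) = 0 := by
  refine hvanish _ ?_
  rw [mem_Icc, ← abs_le, not_le, div_lt_iff₀ (by positivity)] at ht
  rw [verticalLine_im, abs_neg, abs_mul, abs_of_pos (by positivity), mul_comm]
  exact ht

lemma continuous_comp_verticalLine (hQ : ContinuousOn Q rightHalfPlane) {σ : ℝ} (hσ : 0 ≤ σ) :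
    Continuous fun t ↦ Q (verticalLine σ t) :=
  hQ.comp_continuous (continuous_verticalLine σ) fun t ↦ by simpa using hσ

lemma integrable_comp_verticalLine (hQ : ContinuousOn Q rightHalfPlane)
    (hvanish : ∀ z, T < |z.im| → Q z = 0) {σ : ℝ} (hσ : 0 ≤ σ) :
    Integrable fun t ↦ Q (verticalLine σ t) :=
  (continuous_comp_verticalLine hQ hσ).integrable_of_hasCompactSupport
    (.intro isCompact_Icc fun _ ht ↦ vanishing_comp_verticalLine hvanish ht)

lemma exists_integral_norm_comp_verticalLine_le (hQ : ContinuousOn Q rightHalfPlane)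
    (hvanish : ∀ z, T < |z.im| → Q z = 0) :
    ∃ C, ∀ σ ∈ Icc (0 : ℝ) 1, ∫ t, ‖Q (verticalLine σ t)‖ ≤ C := by
  obtain ⟨M, hM⟩ := exists_norm_le_of_vanishing hQ hvanish
  refine ⟨M * volume.real (Icc (-(T / (2 * π))) (T / (2 * π))), fun σ hσ ↦ ?_⟩
  rw [← setIntegral_eq_integral_of_forall_compl_eq_zero fun t ht ↦ by
    rw [vanishing_comp_verticalLine hvanish ht, norm_zero]]
  refine (Real.le_norm_self _).trans (norm_setIntegral_le_of_norm_le_const (by simp) fun t _ ↦ ?_)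
  rw [norm_norm]
  exact hM _ (by simpa using hσ)

lemma fourier_eq_mul_fourier_of_hasDerivAt {f f' : ℝ → ℂ} (hf : Integrable f)
    (hderiv : ∀ t, HasDerivAt f (f' t) t) (hf' : Integrable f') (x : ℝ) :
    𝓕 f' x = 2 * π * Complex.I * x * 𝓕 f x := by
  obtain rfl : deriv f = f' := funext fun t ↦ (hderiv t).deriv
  exact congrFun (Real.fourier_deriv hf (fun t ↦ (hderiv t).differentiableAt) hf') x

lemma norm_fourier_le_integral_norm (f : ℝ → ℂ) (x : ℝ) : ‖𝓕 f x‖ ≤ ∫ t, ‖f t‖ :=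
  VectorFourier.norm_fourierIntegral_le_integral_norm ..

lemma tendsto_rpow_mul_fourier_comp_verticalLine (hQ : ContDiffOn ℝ 1 Q rightHalfPlane)
    (hvanish : ∀ z, T < |z.im| → Q z = 0) {w : ℝ} (hw : 0 < w) :
    Tendsto (fun x : ℝ ↦ (x ^ (1 - w) : ℝ) * 𝓕 (fun t ↦ Q (verticalLine x⁻¹ t)) x) atTop (𝓝 0) := by
  have hcont := continuousOn_verticalDeriv hQ
  have hvanish' := fun z ↦ verticalDeriv_eq_zero (z := z) hvanish
  obtain ⟨C, hC⟩ := exists_integral_norm_comp_verticalLine_le hcont hvanish'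
  have hdecay : Tendsto (fun x : ℝ ↦ x ^ (-w) * (C / (2 * π))) atTop (𝓝 0) := by
    simpa using (tendsto_rpow_neg_atTop hw).mul_const (C / (2 * π))
  refine squeeze_zero_norm' ?_ hdecay
  filter_upwards [eventually_ge_atTop 1] with x hx
  have hx0 : 0 < x := one_pos.trans_le hx
  have hσ : 0 ≤ x⁻¹ := (inv_pos.2 hx0).le
  have hparts : 2 * π * x * ‖𝓕 (fun t ↦ Q (verticalLine x⁻¹ t)) x‖ ≤ C := by
    have h := fourier_eq_mul_fourier_of_hasDerivAt
      (integrable_comp_verticalLine hQ.continuousOn hvanish hσ)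
      (hasDerivAt_comp_verticalLine hQ (inv_pos.2 hx0))
      (integrable_comp_verticalLine hcont hvanish' hσ) x
    calc 2 * π * x * ‖𝓕 (fun t ↦ Q (verticalLine x⁻¹ t)) x‖
        = ‖𝓕 (fun t ↦ verticalDeriv Q (verticalLine x⁻¹ t)) x‖ := by
          simp [h, abs_of_pos Real.pi_pos, abs_of_pos hx0]
      _ ≤ ∫ t, ‖verticalDeriv Q (verticalLine x⁻¹ t)‖ := norm_fourier_le_integral_norm _ _
      _ ≤ C := hC _ ⟨hσ, inv_le_one_of_one_le₀ hx⟩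
  calc ‖(x ^ (1 - w) : ℝ) * 𝓕 (fun t ↦ Q (verticalLine x⁻¹ t)) x‖
      = x ^ (-w) * (2 * π * x * ‖𝓕 (fun t ↦ Q (verticalLine x⁻¹ t)) x‖ / (2 * π)) := by
        rw [norm_mul, Complex.norm_of_nonneg (by positivity), sub_eq_add_neg, Real.rpow_add hx0,
          Real.rpow_one]
        field_simp
    _ ≤ x ^ (-w) * (C / (2 * π)) := by gcongr

lemma fourier_eq_inv_smul_fourier_comp_inv_mul (f : ℝ → ℂ) {x : ℝ} (hx : 0 < x) :
    𝓕 f x = x⁻¹ • 𝓕 (fun v ↦ f (x⁻¹ * v)) 1 := by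
  have h := Measure.integral_comp_inv_mul_left
    (fun t : ℝ ↦ Complex.exp (↑(-2 * π * t * x) * Complex.I) • f t) x
  rw [abs_of_pos hx] at h
  rw [Real.fourier_real_eq_integral_exp_smul, Real.fourier_real_eq_integral_exp_smul,
    eq_inv_smul_iff₀ hx.ne', ← h]
  refine integral_congr_ae (.of_forall fun v ↦ ?_)
  have hv : -2 * π * (x⁻¹ * v) * x = -2 * π * v * 1 := by field_simp
  simp only [hv]

lemma ofReal_mul_cpow {r : ℝ} (hr : 0 < r) {z : ℂ} (hz : z ≠ 0) (c : ℂ) :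
    ((r : ℂ) * z) ^ c = (r : ℂ) ^ c * z ^ c := by
  have hr' : (r : ℂ) ≠ 0 := Complex.ofReal_ne_zero.2 hr.ne'
  rw [Complex.cpow_def_of_ne_zero (mul_ne_zero hr' hz), Complex.cpow_def_of_ne_zero hr',
    Complex.cpow_def_of_ne_zero hz, Complex.log_ofReal_mul hr hz, ← Complex.exp_add,
    Complex.ofReal_log hr.le, add_mul]

lemma tendsto_fourier_comp_scaled_mul_cpow (hQ : ContinuousOn Q rightHalfPlane)
    (hvanish : ∀ z, T < |z.im| → Q z = 0) {b : ℝ} (hb : 1 < b) :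
    Tendsto (fun x : ℝ ↦
        𝓕 (fun v ↦ Q (verticalLine x⁻¹ (x⁻¹ * v)) * verticalLine 1 v ^ (-b : ℂ)) 1) atTop
      (𝓝 (𝓕 (fun v ↦ Q 0 * verticalLine 1 v ^ (-b : ℂ)) 1)) := by
  obtain ⟨M, hM⟩ := exists_norm_le_of_vanishing hQ hvanish
  simp only [Real.fourier_real_eq]
  refine tendsto_integral_filter_of_dominated_convergence
    (fun v ↦ M * ‖verticalLine 1 v ^ (-b : ℂ)‖) ?_ ?_
    ((integrable_verticalLine_one_cpow_neg hb).norm.const_mul M) (.of_forall fun v ↦ ?_)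
  · filter_upwards [eventually_ge_atTop 0] with x hx
    have hcont : Continuous fun v ↦ Q (verticalLine x⁻¹ (x⁻¹ * v)) :=
      (continuous_comp_verticalLine hQ (inv_nonneg.2 hx)).comp (continuous_const_mul _)
    exact (Continuous.smul (by fun_prop)
      (hcont.mul (continuous_verticalLine_cpow one_pos _))).aestronglyMeasurable
  · filter_upwards [eventually_ge_atTop 1] with x hx
    refine .of_forall fun v ↦ ?_
    rw [Circle.norm_smul, norm_mul]
    gcongr
    exact hM _ (by simpa using ⟨one_pos.le.trans hx, inv_le_one_of_one_le₀ hx⟩)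
  · have hline : Tendsto (fun x : ℝ ↦ verticalLine x⁻¹ (x⁻¹ * v)) atTop (𝓝[rightHalfPlane] 0) := by
      simp only [← inv_mul_verticalLine_one]
      refine tendsto_nhdsWithin_iff.2 ⟨?_, ?_⟩
      · simpa using (Complex.continuous_ofReal.tendsto' 0 0 rfl |>.comp
          tendsto_inv_atTop_zero).mul_const (verticalLine 1 v)
      · filter_upwards [eventually_ge_atTop 0] with x hx
        simpa using hx
    exact (((hQ 0 (by simp)).tendsto.comp hline).mul_const _).const_smul _

lemma continuousOn_mulCpowVerticalDeriv (hQ : ContDiffOn ℝ 1 Q rightHalfPlane) (w : ℝ) :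
    ContinuousOn (mulCpowVerticalDeriv w Q) rightHalfPlane :=
  ((continuousOn_verticalDeriv hQ).mul continuousOn_id).add
    (continuousOn_const.mul hQ.continuousOn)

lemma mulCpowVerticalDeriv_eq_zero (hvanish : ∀ z, T < |z.im| → Q z = 0) (w : ℝ) {z : ℂ}
    (hz : T < |z.im|) : mulCpowVerticalDeriv w Q z = 0 := by
  simp [mulCpowVerticalDeriv, verticalDeriv_eq_zero hvanish hz, hvanish z hz]

lemma integrable_comp_verticalLine_mul_cpow (hQ : ContinuousOn Q rightHalfPlane)
    (hvanish : ∀ z, T < |z.im| → Q z = 0) {σ : ℝ} (hσ : 0 < σ) (c : ℂ) :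
    Integrable fun t ↦ Q (verticalLine σ t) * verticalLine σ t ^ c :=
  ((continuous_comp_verticalLine hQ hσ.le).mul
    (continuous_verticalLine_cpow hσ c)).integrable_of_hasCompactSupport
    (.intro (isCompact_Icc (a := -(T / (2 * π))) (b := T / (2 * π))) fun t ht ↦ by
      simp [vanishing_comp_verticalLine hvanish ht])

lemma hasDerivAt_comp_verticalLine_mul_cpow (hQ : ContDiffOn ℝ 1 Q rightHalfPlane) {σ : ℝ}
    (hσ : 0 < σ) (w t : ℝ) :
    HasDerivAt (fun s ↦ Q (verticalLine σ s) * verticalLine σ s ^ (-w : ℂ))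
      (mulCpowVerticalDeriv w Q (verticalLine σ t) * verticalLine σ t ^ (-(w + 1 : ℝ) : ℂ)) t := by
  have hslit := verticalLine_mem_slitPlane hσ t
  have hne := Complex.slitPlane_ne_zero hslit
  have hpow : verticalLine σ t ^ (-w : ℂ) =
      verticalLine σ t * verticalLine σ t ^ (-(w + 1 : ℝ) : ℂ) := by
    rw [show (-w : ℂ) = 1 + -(w + 1 : ℝ) by push_cast; ring, Complex.cpow_add _ _ hne,
      Complex.cpow_one]
  have hcpow := (Complex.hasStrictDerivAt_cpow_const (c := (-w : ℂ)) hslit).hasDerivAt.comp t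
    (hasDerivAt_verticalLine σ t)
  refine ((hasDerivAt_comp_verticalLine hQ hσ t).mul hcpow).congr_deriv ?_
  rw [Function.comp_apply, hpow, mulCpowVerticalDeriv]
  push_cast
  ring_nf

lemma fourier_const_mul (c : ℂ) (f : ℝ → ℂ) (x : ℝ) : 𝓕 (fun t ↦ c * f t) x = c * 𝓕 f x :=
  congrFun (VectorFourier.fourierIntegral_const_smul ..) x

lemma rpow_mul_fourier_comp_verticalLine_mul_cpow (hQ : ContDiffOn ℝ 1 Q rightHalfPlane)
    (hvanish : ∀ z, T < |z.im| → Q z = 0) (w : ℝ) {x : ℝ} (hx : 0 < x) :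
    (x ^ (1 - w) : ℝ) * 𝓕 (fun t ↦ Q (verticalLine x⁻¹ t) * verticalLine x⁻¹ t ^ (-w : ℂ)) x =
      (2 * π * Complex.I)⁻¹ * 𝓕 (fun v ↦ mulCpowVerticalDeriv w Q (verticalLine x⁻¹ (x⁻¹ * v)) *
        verticalLine 1 v ^ (-(w + 1 : ℝ) : ℂ)) 1 := by
  have hσ := inv_pos.2 hx
  have hparts := fourier_eq_mul_fourier_of_hasDerivAt
    (integrable_comp_verticalLine_mul_cpow hQ.continuousOn hvanish hσ _)
    (hasDerivAt_comp_verticalLine_mul_cpow hQ hσ w)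
    (integrable_comp_verticalLine_mul_cpow (continuousOn_mulCpowVerticalDeriv hQ w)
      (fun z ↦ mulCpowVerticalDeriv_eq_zero hvanish w) hσ _) x
  have hscale (v : ℝ) : verticalLine x⁻¹ (x⁻¹ * v) ^ (-(w + 1 : ℝ) : ℂ) =
      (x ^ (w + 1) : ℝ) * verticalLine 1 v ^ (-(w + 1 : ℝ) : ℂ) := by
    rw [← inv_mul_verticalLine_one, ofReal_mul_cpow hσ
      (Complex.slitPlane_ne_zero (verticalLine_mem_slitPlane one_pos v)), ← Complex.ofReal_neg,
      ← Complex.ofReal_cpow hσ.le, Real.inv_rpow hx.le, Real.rpow_neg hx.le, inv_inv]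
  have hx' : (x : ℂ) ≠ 0 := Complex.ofReal_ne_zero.2 hx.ne'
  have hpow : ((x ^ (1 - w) : ℝ) : ℂ) * (x ^ (w + 1) : ℝ) = x * x := by
    rw [← Complex.ofReal_mul, ← Complex.ofReal_mul, ← Real.rpow_add hx, ← sq, ← Real.rpow_two]
    ring_nf
  rw [fourier_eq_inv_smul_fourier_comp_inv_mul _ hx] at hparts
  simp only [hscale, mul_left_comm _ ((x ^ (w + 1) : ℝ) : ℂ)] at hparts
  rw [fourier_const_mul, Complex.real_smul, Complex.ofReal_inv, inv_mul_eq_iff_eq_mul₀ hx']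
    at hparts
  rw [eq_inv_mul_iff_mul_eq₀ Complex.two_pi_I_ne_zero]
  refine mul_left_cancel₀ (mul_ne_zero hx' hx') ?_
  linear_combination -(x ^ (1 - w) : ℝ) * hparts + hpow * 𝓕 (fun v ↦
    mulCpowVerticalDeriv w Q (verticalLine x⁻¹ (x⁻¹ * v)) *
      verticalLine 1 v ^ (-(w + 1 : ℝ) : ℂ)) 1

lemma tendsto_rpow_mul_fourier_comp_verticalLine_mul_cpow (hQ : ContDiffOn ℝ 1 Q rightHalfPlane)
    (hvanish : ∀ z, T < |z.im| → Q z = 0) {w : ℝ} (hw : 0 < w) :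
    Tendsto (fun x : ℝ ↦ (x ^ (1 - w) : ℝ) *
        𝓕 (fun t ↦ Q (verticalLine x⁻¹ t) * verticalLine x⁻¹ t ^ (-w : ℂ)) x) atTop
      (𝓝 (Q 0 * (Real.exp (-1) / Real.Gamma w : ℝ))) := by
  have hb : 1 < w + 1 := lt_add_of_pos_left 1 hw
  have hlim := (tendsto_fourier_comp_scaled_mul_cpow (continuousOn_mulCpowVerticalDeriv hQ w)
    (fun z ↦ mulCpowVerticalDeriv_eq_zero hvanish w) hb).const_mul (2 * π * Complex.I)⁻¹
  rw [fourier_const_mul, fourier_verticalLine_one_cpow_neg hb, Real.Gamma_add_one hw.ne',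
    mulCpowVerticalDeriv, mul_zero, zero_add] at hlim
  refine (hlim.congr' ?_).trans_eq (congrArg 𝓝 ?_)
  · filter_upwards [eventually_gt_atTop 0] with x hx
    exact (rpow_mul_fourier_comp_verticalLine_mul_cpow hQ hvanish w hx).symm
  · have hw' : (w : ℂ) ≠ 0 := Complex.ofReal_ne_zero.2 hw.ne'
    have hΓ : (Real.Gamma w : ℂ) ≠ 0 := Complex.ofReal_ne_zero.2 (Real.Gamma_pos_of_pos hw).ne'
    push_cast
    field_simp

end VerticalLine

/-! ### A kernel with exponential lower bound and compactly supported Fourier transform -/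

section Kernel

variable {A : ℝ}

lemma norm_cexp_two_pi_mul_mul_I (t u : ℝ) : ‖Complex.exp (2 * π * t * u * Complex.I)‖ = 1 := by
  exact_mod_cast Complex.norm_exp_ofReal_mul_I (2 * π * t * u)

lemma fourier_mul_integral_cexp {μ : Measure ℝ} [SFinite μ] {p φ : ℝ → ℂ} (hp : Integrable p)
    (hφ : Integrable φ μ) (x : ℝ) :
    𝓕 (fun t : ℝ ↦ p t * ∫ u, Complex.exp (2 * π * t * u * Complex.I) * φ u ∂μ) x =
      ∫ u, 𝓕 p (x - u) * φ u ∂μ := by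
  have hint : Integrable (Function.uncurry fun t u : ℝ ↦
      Complex.exp (2 * π * t * (u - x : ℝ) * Complex.I) * (p t * φ u)) (volume.prod μ) :=
    (hp.mul_prod hφ).bdd_mul (c := 1) (by fun_prop)
      (.of_forall fun z ↦ (norm_cexp_two_pi_mul_mul_I _ _).le)
  have hexp (t u : ℝ) : Complex.exp (2 * π * t * (u - x : ℝ) * Complex.I) =
      Complex.exp (↑(-2 * π * t * x) * Complex.I) *
        Complex.exp (2 * π * t * u * Complex.I) := by
    rw [← Complex.exp_add]
    push_cast
    ring_nf
  calc 𝓕 (fun t : ℝ ↦ p t * ∫ u, Complex.exp (2 * π * t * u * Complex.I) * φ u ∂μ) x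
      = ∫ t : ℝ, ∫ u, Complex.exp (2 * π * t * (u - x : ℝ) * Complex.I) * (p t * φ u) ∂μ := by
        rw [Real.fourier_real_eq_integral_exp_smul]
        refine integral_congr_ae (.of_forall fun t ↦ ?_)
        simp only [smul_eq_mul, ← integral_const_mul]
        refine integral_congr_ae (.of_forall fun u ↦ ?_)
        simp only [hexp]
        ring
    _ = ∫ u, (∫ t : ℝ, Complex.exp (2 * π * t * (u - x : ℝ) * Complex.I) * (p t * φ u)) ∂μ :=
        integral_integral_swap hint
    _ = ∫ u, 𝓕 p (x - u) * φ u ∂μ := by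
        refine integral_congr_ae (.of_forall fun u ↦ ?_)
        simp only [Real.fourier_real_eq_integral_exp_smul, ← integral_mul_const, smul_eq_mul]
        refine integral_congr_ae (.of_forall fun t ↦ ?_)
        simp only
        rw [← mul_assoc]
        congr 3
        push_cast
        ring

lemma integrable_exp_neg_mul_abs (hA : 0 < A) :
    Integrable (fun u : ℝ ↦ Real.exp (-(A * |u|))) := by
  rw [← integrableOn_univ, ← Iic_union_Ioi (a := (0 : ℝ))]
  refine IntegrableOn.union ?_ ?_
  · refine (integrableOn_exp_mul_Iic hA 0).congr_fun (fun u hu ↦ ?_) measurableSet_Iic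
    simp only [abs_of_nonpos (mem_Iic.1 hu), mul_neg, neg_neg]
  · refine (integrableOn_exp_mul_Ioi (neg_lt_zero.2 hA) 0).congr_fun (fun u hu ↦ ?_)
      measurableSet_Ioi
    simp only [abs_of_pos (mem_Ioi.1 hu), neg_mul]

lemma integral_cexp_mul_exp_neg_mul_abs (hA : 0 < A) (t : ℝ) :
    ∫ u : ℝ, Complex.exp (2 * π * t * u * Complex.I) * Real.exp (-(A * |u|)) =
      (2 * A / (A ^ 2 + (2 * π * t) ^ 2) : ℝ) := by
  have hint : Integrable fun u : ℝ ↦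
      Complex.exp (2 * π * t * u * Complex.I) * Real.exp (-(A * |u|)) :=
    (integrable_exp_neg_mul_abs hA).ofReal.bdd_mul (c := 1) (by fun_prop)
      (.of_forall fun u ↦ (norm_cexp_two_pi_mul_mul_I t u).le)
  have hleft : ∫ u : ℝ in Iic 0, Complex.exp (2 * π * t * u * Complex.I) * Real.exp (-(A * |u|)) =
      1 / (A + 2 * π * t * Complex.I) := by
    rw [setIntegral_congr_fun (g := fun u : ℝ ↦ Complex.exp ((A + 2 * π * t * Complex.I) * u))
      measurableSet_Iic, integral_exp_mul_complex_Iic (by simpa using hA)]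
    · simp
    · intro u hu
      simp only [abs_of_nonpos (mem_Iic.1 hu), Complex.ofReal_exp, ← Complex.exp_add]
      push_cast
      ring_nf
  have hright : ∫ u : ℝ in Ioi 0, Complex.exp (2 * π * t * u * Complex.I) * Real.exp (-(A * |u|)) =
      -1 / (-A + 2 * π * t * Complex.I) := by
    rw [setIntegral_congr_fun (g := fun u : ℝ ↦ Complex.exp ((-A + 2 * π * t * Complex.I) * u))
      measurableSet_Ioi, integral_exp_mul_complex_Ioi (by simpa using hA)]
    · simp
    · intro u hu
      simp only [abs_of_pos (mem_Ioi.1 hu), Complex.ofReal_exp, ← Complex.exp_add]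
      push_cast
      ring_nf
  have hne {b : ℝ} (hb : b ≠ 0) : (b + 2 * π * t * Complex.I : ℂ) ≠ 0 := fun h ↦
    hb (by simpa using congrArg Complex.re h)
  have hne_neg : (-A + 2 * π * t * Complex.I : ℂ) ≠ 0 := by
    exact_mod_cast hne (neg_ne_zero.2 hA.ne')
  have hden : (A ^ 2 + (2 * π * t) ^ 2 : ℂ) ≠ 0 := by
    exact_mod_cast (by positivity : A ^ 2 + (2 * π * t) ^ 2 ≠ 0)
  rw [← intervalIntegral.integral_Iic_add_Ioi hint.integrableOn hint.integrableOn, hleft, hright]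
  push_cast
  rw [div_add_div _ _ (hne hA.ne') hne_neg, div_eq_div_iff (mul_ne_zero (hne hA.ne') hne_neg) hden]
  linear_combination (-(2 * A) * (2 * π * t) ^ 2 : ℂ) * Complex.I_sq

lemma conj_fourier_of_even {f : ℝ → ℝ} (hf : f.Even) (y : ℝ) :
    starRingEnd ℂ (𝓕 (fun t ↦ (f t : ℂ)) y) = 𝓕 (fun t ↦ (f t : ℂ)) y := by
  rw [Real.fourier_real_eq_integral_exp_smul, ← integral_conj, ← integral_neg_eq_self]
  refine integral_congr_ae (.of_forall fun t ↦ ?_)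
  simp only [smul_eq_mul, map_mul, Complex.conj_ofReal, hf t, ← Complex.exp_conj, Complex.conj_I]
  congr 2
  push_cast
  ring

open scoped Convolution in
lemma exists_schwartzMap_hasCompactSupport_fourier_nonneg :
    ∃ (q : SchwartzMap ℝ ℂ) (R : ℝ → ℝ), HasCompactSupport q ∧
      (∀ y, 𝓕 (q : ℝ → ℂ) y = R y) ∧ (∀ y, 0 ≤ R y) ∧ 0 < R 0 := by
  let b : ContDiffBump (0 : ℝ) := ⟨1, 2, one_pos, one_lt_two⟩
  let φ : ℝ → ℂ := fun t ↦ (b t : ℝ)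
  have hφ_smooth : ContDiff ℝ ∞ φ := Complex.ofRealCLM.contDiff.comp b.contDiff
  have hφ_compact : HasCompactSupport φ := b.hasCompactSupport.comp_left Complex.ofReal_zero
  have hφ_int : Integrable φ := hφ_smooth.continuous.integrable_of_hasCompactSupport hφ_compact
  have hφ_real (y : ℝ) : ((𝓕 φ y).re : ℂ) = 𝓕 φ y :=
    Complex.conj_eq_iff_re.1 (conj_fourier_of_even b.neg y)
  have hφ_zero : (𝓕 φ 0).re = ∫ t, b t := by
    simp [φ, Real.fourier_real_eq_integral_exp_smul, integral_complex_ofReal]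
  have hq_smooth : ContDiff ℝ ∞ (φ ⋆[ContinuousLinearMap.mul ℝ ℂ] φ) :=
    hφ_compact.contDiff_convolution_right _ hφ_smooth.continuous.locallyIntegrable hφ_smooth
  have hq_compact : HasCompactSupport (φ ⋆[ContinuousLinearMap.mul ℝ ℂ] φ) :=
    hφ_compact.convolution _ hφ_compact
  refine ⟨hq_compact.toSchwartzMap hq_smooth, fun y ↦ (𝓕 φ y).re ^ 2, hq_compact,
    fun y ↦ ?_, fun y ↦ sq_nonneg _, ?_⟩
  · rw [Complex.ofReal_pow, hφ_real, sq]
    exact Real.fourier_mul_convolution_eq hφ_int hφ_int y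
  · exact pow_pos (hφ_zero ▸ b.integral_pos) 2

variable {p : SchwartzMap ℝ ℂ} {K : ℝ → ℝ}

lemma continuous_of_fourier_eq_ofReal (hpK : ∀ y, 𝓕 (p : ℝ → ℂ) y = K y) : Continuous K :=
  (Complex.continuous_re.comp (𝓕 p).continuous).congr fun y ↦ by
    simp [SchwartzMap.fourier_coe, hpK]

lemma norm_le_integral_norm_of_fourier_eq_ofReal (hpK : ∀ y, 𝓕 (p : ℝ → ℂ) y = K y) (y : ℝ) :
    ‖K y‖ ≤ ∫ t, ‖p t‖ := by
  simpa [hpK] using norm_fourier_le_integral_norm p y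

lemma integrable_of_fourier_eq_ofReal (hpK : ∀ y, 𝓕 (p : ℝ → ℂ) y = K y) : Integrable K :=
  (𝓕 p).integrable.re.congr (.of_forall fun y ↦ by simp [SchwartzMap.fourier_coe, hpK])

lemma integral_cexp_mul_of_fourier_eq_ofReal (hpK : ∀ y, 𝓕 (p : ℝ → ℂ) y = K y) (t : ℝ) :
    ∫ y : ℝ, Complex.exp (t * y * Complex.I) * K y = p (t / (2 * π)) := by
  rw [← congrFun (p.continuous.fourierInv_fourier_eq p.integrable
    (by simpa only [← SchwartzMap.fourier_coe] using (𝓕 p).integrable)) (t / (2 * π)),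
    Real.fourierInv_eq']
  refine integral_congr_ae (.of_forall fun y ↦ ?_)
  simp only [hpK, smul_eq_mul, RCLike.inner_apply, conj_trivial]
  congr 3
  push_cast
  field_simp

lemma integral_mul_exp_neg_mul_abs_le {R : ℝ → ℝ} (hR : ∀ y, 0 ≤ R y)
    (hint : ∀ y, Integrable fun u ↦ R (y - u) * Real.exp (-(A * |u|))) (hA : 0 ≤ A) (y : ℝ) :
    (∫ u, R (0 - u) * Real.exp (-(A * |u|))) * Real.exp (-(A * |y|)) ≤
      ∫ u, R (y - u) * Real.exp (-(A * |u|)) := by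
  rw [← integral_add_right_eq_self (fun u ↦ R (y - u) * Real.exp (-(A * |u|))) y,
    ← integral_mul_const]
  refine integral_mono ((hint 0).mul_const _) ((hint y).comp_add_right y) fun u ↦ ?_
  have htri : A * |u + y| ≤ A * (|u| + |y|) := mul_le_mul_of_nonneg_left (abs_add_le u y) hA
  simp only [mul_assoc, ← Real.exp_add, show y - (u + y) = 0 - u by ring]
  gcongr
  · exact hR _
  · linarith

lemma exists_schwartzMap_exp_le_fourier (hA : 0 < A) :
    ∃ (p : SchwartzMap ℝ ℂ) (K : ℝ → ℝ) (c : ℝ), HasCompactSupport p ∧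
      (∀ y, 𝓕 (p : ℝ → ℂ) y = K y) ∧ 0 < c ∧ ∀ y, c * Real.exp (-(A * |y|)) ≤ K y := by
  obtain ⟨q, R, hq_compact, hqR, hR_nonneg, hR_zero⟩ :=
    exists_schwartzMap_hasCompactSupport_fourier_nonneg
  have hR_cont : Continuous R := continuous_of_fourier_eq_ofReal hqR
  have hR_bdd := norm_le_integral_norm_of_fourier_eq_ofReal hqR
  have hint (y : ℝ) : Integrable fun u : ℝ ↦ R (y - u) * Real.exp (-(A * |u|)) :=
    (integrable_exp_neg_mul_abs hA).bdd_mul (by fun_prop) (.of_forall fun u ↦ hR_bdd _)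
  let r : ℝ → ℝ := fun t ↦ 2 * A / (A ^ 2 + (2 * π * t) ^ 2)
  have hr_smooth : ContDiff ℝ ∞ r := by
    have (t : ℝ) : A ^ 2 + (2 * π * t) ^ 2 ≠ 0 := by positivity
    fun_prop (disch := assumption)
  have hp_smooth : ContDiff ℝ ∞ fun t ↦ q t * r t :=
    (q.smooth _).mul (Complex.ofRealCLM.contDiff.comp hr_smooth)
  have hp_compact : HasCompactSupport fun t ↦ q t * r t := hq_compact.mul_right
  refine ⟨hp_compact.toSchwartzMap hp_smooth, fun y ↦ ∫ u, R (y - u) * Real.exp (-(A * |u|)),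
    ∫ u, R (0 - u) * Real.exp (-(A * |u|)), hp_compact, fun y ↦ ?_, ?_,
    integral_mul_exp_neg_mul_abs_le hR_nonneg hint hA.le⟩
  · have h := fourier_mul_integral_cexp q.integrable (integrable_exp_neg_mul_abs hA).ofReal y
    simp only [Complex.coe_algebraMap, integral_cexp_mul_exp_neg_mul_abs hA, hqR] at h
    rw [← integral_complex_ofReal]
    exact_mod_cast h
  · refine integral_pos_of_integrable_nonneg_nonzero (x := 0) (by fun_prop) (hint 0)
      (fun u ↦ mul_nonneg (hR_nonneg _) (Real.exp_pos _).le) ?_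
    simpa using hR_zero.ne'

end Kernel

/-! ### Weak convergence of finite measures -/

section WeakConvergence

open scoped NNReal ENNReal BoundedContinuousFunction

lemma charFun_normalize {E : Type*} [NormedAddCommGroup E] [InnerProductSpace ℝ E]
    [MeasurableSpace E] {ν : FiniteMeasure E} (hν : ν ≠ 0) (t : E) :
    charFun (ν.normalize : Measure E) t = (ν.mass : ℂ)⁻¹ * charFun (ν : Measure E) t := by
  rw [ν.toMeasure_normalize_eq_of_nonzero hν, charFun_apply, charFun_apply,
    integral_smul_nnreal_measure]
  simp [NNReal.smul_def]

theorem tendsto_finiteMeasure_of_tendsto_charFun {E ι : Type*} [NormedAddCommGroup E]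
    [InnerProductSpace ℝ E] [FiniteDimensional ℝ E] [MeasurableSpace E] [BorelSpace E]
    {L : Filter ι} [L.IsCountablyGenerated] {ν : FiniteMeasure E} {νs : ι → FiniteMeasure E}
    (h : ∀ t, Tendsto (fun i ↦ charFun (νs i : Measure E) t) L (𝓝 (charFun (ν : Measure E) t))) :
    Tendsto νs L (𝓝 ν) := by
  have hmass : Tendsto (fun i ↦ (νs i).mass) L (𝓝 ν.mass) := by
    simpa [Function.comp_def] using (Complex.continuous_re.tendsto _).comp (h 0)
  obtain rfl | hν := eq_or_ne ν 0
  · exact FiniteMeasure.tendsto_zero_of_tendsto_zero_mass (by simpa using hmass)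
  have hmass_ne : ν.mass ≠ 0 := ν.mass_nonzero_iff.2 hν
  refine FiniteMeasure.tendsto_of_tendsto_normalize_testAgainstNN_of_tendsto_mass
    (tendsto_of_seq_tendsto fun k hk ↦ ?_) hmass
  refine ProbabilityMeasure.tendsto_of_tendsto_charFun fun t ↦ ?_
  have hlim : Tendsto (fun n ↦ ((νs (k n)).mass : ℂ)⁻¹ * charFun (νs (k n) : Measure E) t) atTop
      (𝓝 ((ν.mass : ℂ)⁻¹ * charFun (ν : Measure E) t)) := by
    have hmass_inv : Tendsto (fun i ↦ ((νs i).mass : ℂ)⁻¹) L (𝓝 (ν.mass : ℂ)⁻¹) := by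
      refine Tendsto.inv₀ ?_ (by exact_mod_cast hmass_ne)
      exact (Complex.continuous_ofReal.tendsto _).comp (NNReal.tendsto_coe.2 hmass)
    exact (hmass_inv.mul (h t)).comp hk
  rw [charFun_normalize hν]
  refine hlim.congr' ?_
  filter_upwards [(hmass.comp hk).eventually_ne hmass_ne] with n hn
  exact (charFun_normalize ((νs (k n)).mass_nonzero_iff.1 hn) t).symm

variable {Ω ι : Type*} [MeasurableSpace Ω] [TopologicalSpace Ω] [OpensMeasurableSpace Ω]
  {L : Filter ι} {ν : FiniteMeasure Ω} {νs : ι → FiniteMeasure Ω} {E : Set Ω}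

theorem tendsto_finiteMeasure_of_null_frontier [HasOuterApproxClosed Ω]
    (h : Tendsto νs L (𝓝 ν)) (hE : (ν : Measure Ω) (frontier E) = 0) :
    Tendsto (fun i ↦ (νs i : Measure Ω) E) L (𝓝 ((ν : Measure Ω) E)) := by
  obtain rfl | hν := eq_or_ne ν 0
  · refine tendsto_of_tendsto_of_tendsto_of_le_of_le tendsto_const_nhds
      (ENNReal.tendsto_coe.2 h.mass) (fun _ ↦ zero_le) fun i ↦ ?_
    rw [FiniteMeasure.ennreal_mass]
    exact measure_mono (subset_univ E)
  have : Nonempty Ω := by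
    by_contra hempty
    rw [not_nonempty_iff] at hempty
    exact hν (Subtype.ext ((ν : Measure Ω).eq_zero_of_isEmpty))
  have hnormalize : Tendsto (fun i ↦ (νs i).normalize E) L (𝓝 (ν.normalize E)) := by
    refine ProbabilityMeasure.tendsto_measure_of_null_frontier_of_tendsto
      (FiniteMeasure.tendsto_normalize_of_tendsto h hν) ?_
    rw [ν.normalize_eq_of_nonzero hν, (ν.null_iff_toMeasure_null _).2 hE, mul_zero]
  have hmul := ENNReal.tendsto_coe.2 (h.mass.mul hnormalize)
  simpa [← FiniteMeasure.self_eq_mass_mul_normalize] using hmul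

theorem tendsto_setIntegral_of_null_frontier [HasOuterApproxClosed Ω]
    (h : Tendsto νs L (𝓝 ν)) (ρ : Ω →ᵇ ℝ≥0) (hE : (ν : Measure Ω) (frontier E) = 0) :
    Tendsto (fun i ↦ ∫ y in E, (ρ y : ℝ) ∂(νs i : Measure Ω)) L
      (𝓝 (∫ y in E, (ρ y : ℝ) ∂(ν : Measure Ω))) := by
  have hfinite (m : FiniteMeasure Ω) : IsFiniteMeasure ((m : Measure Ω).withDensity (ρ ·)) :=
    isFiniteMeasure_withDensity (ρ.lintegral_lt_top_of_nnreal _).ne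
  let weighted (m : FiniteMeasure Ω) : FiniteMeasure Ω :=
    ⟨(m : Measure Ω).withDensity (ρ ·), hfinite m⟩
  have hweighted : Tendsto (fun i ↦ weighted (νs i)) L (𝓝 (weighted ν)) := by
    rw [FiniteMeasure.tendsto_iff_forall_lintegral_tendsto] at h ⊢
    intro f
    simpa [weighted, lintegral_withDensity_eq_lintegral_mul _ ρ.measurable_coe_ennreal_comp
      f.measurable_coe_ennreal_comp] using h (ρ * f)
  have hintegral (m : FiniteMeasure Ω) :
      ((weighted m : Measure Ω) E).toReal = ∫ y in E, (ρ y : ℝ) ∂(m : Measure Ω) := by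
    rw [integral_eq_lintegral_of_nonneg_ae (.of_forall fun y ↦ (ρ y).coe_nonneg)
      (by fun_prop)]
    simp [weighted, withDensity_apply']
  simp only [← hintegral]
  exact (ENNReal.tendsto_toReal (measure_ne_top _ _)).comp
    (tendsto_finiteMeasure_of_null_frontier hweighted (withDensity_absolutelyContinuous _ _ hE))

end WeakConvergence

/-! ### The Tauberian theorem for Laplace transforms of measures -/

section Laplace

variable {ν : Measure ℝ} {A w : ℝ} {G H : ℂ → ℂ}

lemma fourier_mul_laplace_verticalLine [SFinite ν] {σ : ℝ}
    (hint : Integrable (fun u ↦ Real.exp (-((A + σ) * u))) ν) {p : ℝ → ℂ} (hp : Integrable p)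
    (x : ℝ) :
    𝓕 (fun t ↦ p t * ∫ u : ℝ, Complex.exp (-((A + verticalLine σ t) * u)) ∂ν) x =
      ∫ u, 𝓕 p (x - u) * Real.exp (-((A + σ) * u)) ∂ν := by
  have hlaplace (t : ℝ) : ∫ u : ℝ, Complex.exp (-((A + verticalLine σ t) * u)) ∂ν =
      ∫ u : ℝ, Complex.exp (2 * π * t * u * Complex.I) * Real.exp (-((A + σ) * u)) ∂ν := by
    refine integral_congr_ae (.of_forall fun u ↦ ?_)
    simp only [Complex.ofReal_exp, ← Complex.exp_add, verticalLine]
    push_cast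
    ring_nf
  simp only [hlaplace]
  exact fourier_mul_integral_cexp hp hint.ofReal x

lemma contDiff_comp_neg_im_div {p : ℝ → ℂ} (hp : ContDiff ℝ 1 p) :
    ContDiff ℝ 1 fun z : ℂ ↦ p (-z.im / (2 * π)) := by
  have him : ContDiff ℝ 1 Complex.im := Complex.imCLM.contDiff
  fun_prop

lemma exists_vanishing_of_hasCompactSupport {p : ℝ → ℂ} (hp : HasCompactSupport p) :
    ∃ T, ∀ z : ℂ, T < |z.im| → p (-z.im / (2 * π)) = 0 := by
  obtain ⟨R, hR⟩ := hp.isCompact.isBounded.subset_closedBall 0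
  refine ⟨2 * π * R, fun z hz ↦ image_eq_zero_of_notMem_tsupport fun hmem ↦ ?_⟩
  have hle : |z.im| / (2 * π) ≤ R := by
    simpa [abs_div, abs_of_pos Real.pi_pos] using hR hmem
  rw [div_le_iff₀' (by positivity)] at hle
  exact hz.not_ge hle

lemma fourier_add_of_integrable {f g : ℝ → ℂ} (hf : Integrable f) (hg : Integrable g) (x : ℝ) :
    𝓕 (fun t ↦ f t + g t) x = 𝓕 f x + 𝓕 g x :=
  congrFun (VectorFourier.fourierIntegral_add (L := innerₗ ℝ) Real.continuous_fourierChar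
    continuous_inner hf hg) x

lemma tendsto_rpow_mul_fourier_mul_verticalLine {L : ℂ → ℂ} (hw : 0 < w)
    (hG : ContDiffOn ℝ 1 G rightHalfPlane) (hH : ContDiffOn ℝ 1 H rightHalfPlane)
    (hL : ∀ z : ℂ, 0 < z.re → L z = G z * z ^ (-w : ℂ) + H z)
    {p : ℝ → ℂ} (hp : ContDiff ℝ 1 p) (hp_compact : HasCompactSupport p) :
    Tendsto (fun x : ℝ ↦ (x ^ (1 - w) : ℝ) * 𝓕 (fun t ↦ p t * L (verticalLine x⁻¹ t)) x) atTop
      (𝓝 (p 0 * G 0 * (Real.exp (-1) / Real.Gamma w : ℝ))) := by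
  let P : ℂ → ℂ := fun z ↦ p (-z.im / (2 * π))
  have hP : ContDiffOn ℝ 1 P rightHalfPlane := (contDiff_comp_neg_im_div hp).contDiffOn
  have hP_line (σ t : ℝ) : P (verticalLine σ t) = p t := by
    simp only [P, verticalLine_im, neg_neg]
    congr 1
    field_simp
  obtain ⟨T, hT⟩ := exists_vanishing_of_hasCompactSupport hp_compact
  have hPG_vanish (z : ℂ) (hz : T < |z.im|) : P z * G z = 0 := by simp [P, hT z hz]
  have hPH_vanish (z : ℂ) (hz : T < |z.im|) : P z * H z = 0 := by simp [P, hT z hz]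
  have hmain := tendsto_rpow_mul_fourier_comp_verticalLine_mul_cpow (hP.mul hG) hPG_vanish hw
  have herr := tendsto_rpow_mul_fourier_comp_verticalLine (hP.mul hH) hPH_vanish hw
  have hlim := hmain.add herr
  simp only [P, Complex.zero_im, neg_zero, zero_div, add_zero] at hlim
  refine hlim.congr' ?_
  filter_upwards [eventually_gt_atTop 0] with x hx
  have hσ := inv_pos.2 hx
  rw [← mul_add, ← fourier_add_of_integrable
    (integrable_comp_verticalLine_mul_cpow (hP.mul hG).continuousOn hPG_vanish hσ _)
    (integrable_comp_verticalLine (hP.mul hH).continuousOn hPH_vanish hσ.le)]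
  refine congrArg _ (congrFun (congrArg 𝓕 (funext fun t ↦ ?_)) x)
  rw [hL _ (by simpa using hσ), hP_line]
  ring

lemma fourier_comp_add_right_eq (f : ℝ → ℂ) (t y : ℝ) :
    𝓕 (fun s ↦ f (s + t / (2 * π))) y = Complex.exp (t * y * Complex.I) * 𝓕 f y := by
  refine (congrFun (VectorFourier.fourierIntegral_comp_add_right Real.fourierChar volume (innerₗ ℝ)
    f (t / (2 * π))) y).trans ?_
  rw [Circle.smul_def, Real.fourierChar_apply, smul_eq_mul]
  congr 2
  simp only [innerₗ_apply_apply, RCLike.inner_apply, conj_trivial]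
  push_cast
  field_simp

/-- The image under `u ↦ x - u` of the measure
`x ^ (1 - w) * exp (1 - u / x) * K (x - u) * exp (-A * u) dν(u)`. The normalization is such that
these measures converge weakly, as `x → ∞`, to a constant multiple of `K y dy`. -/
noncomputable def smoothedMeasure (ν : Measure ℝ) (A w : ℝ) (K : ℝ → ℝ) (x : ℝ) : Measure ℝ :=
  (ν.withDensity fun u ↦ ENNReal.ofReal
    (x ^ (1 - w) * Real.exp 1 * Real.exp (-((A + x⁻¹) * u)) * K (x - u))).map (x - ·)

section SmoothedMeasure

variable {K : ℝ → ℝ} {x : ℝ}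

lemma integral_smoothedMeasure {E : Type*} [NormedAddCommGroup E] [NormedSpace ℝ E]
    (hK : Continuous K) (hK_nonneg : ∀ y, 0 ≤ K y) (hx : 0 < x) (f : ℝ → E) :
    ∫ y, f y ∂smoothedMeasure ν A w K x = ∫ u,
      (x ^ (1 - w) * Real.exp 1 * Real.exp (-((A + x⁻¹) * u)) * K (x - u)) • f (x - u) ∂ν := by
  have hsub : MeasurableEmbedding (x - ·) := (MeasurableEquiv.subLeft x).measurableEmbedding
  rw [smoothedMeasure, hsub.integral_map,
    integral_withDensity_eq_integral_toReal_smul (by fun_prop) (by simp)]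
  refine integral_congr_ae (.of_forall fun u ↦ ?_)
  have hdensity : 0 ≤ x ^ (1 - w) * Real.exp 1 * Real.exp (-((A + x⁻¹) * u)) * K (x - u) := by
    have := hK_nonneg (x - u)
    positivity
  simp [ENNReal.toReal_ofReal hdensity]

lemma isFiniteMeasure_smoothedMeasure (hint : Integrable (fun u ↦ Real.exp (-((A + x⁻¹) * u))) ν)
    (hK : Continuous K) {M : ℝ} (hM : ∀ y, ‖K y‖ ≤ M) :
    IsFiniteMeasure (smoothedMeasure ν A w K x) := by
  have hdensity : Integrable
      (fun u ↦ x ^ (1 - w) * Real.exp 1 * Real.exp (-((A + x⁻¹) * u)) * K (x - u)) ν :=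
    (hint.const_mul _).mul_bdd (by fun_prop) (.of_forall fun u ↦ hM _)
  have := isFiniteMeasure_withDensity_ofReal hdensity.2
  exact Measure.isFiniteMeasure_map _ _

lemma charFun_smoothedMeasure [SFinite ν] (hx : 0 < x)
    (hint : Integrable (fun u ↦ Real.exp (-((A + x⁻¹) * u))) ν) {p : SchwartzMap ℝ ℂ}
    (hpK : ∀ y, 𝓕 (p : ℝ → ℂ) y = K y) (hK_nonneg : ∀ y, 0 ≤ K y) (t : ℝ) :
    charFun (smoothedMeasure ν A w K x) t = Real.exp 1 * ((x ^ (1 - w) : ℝ) *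
      𝓕 (fun s ↦ p (s + t / (2 * π)) *
        ∫ u : ℝ, Complex.exp (-((A + verticalLine x⁻¹ s) * u)) ∂ν) x) := by
  rw [charFun_apply_real, integral_smoothedMeasure (continuous_of_fourier_eq_ofReal hpK)
    hK_nonneg hx, fourier_mul_laplace_verticalLine hint (p.integrable.comp_add_right _),
    ← integral_const_mul, ← integral_const_mul]
  refine integral_congr_ae (.of_forall fun u ↦ ?_)
  simp only [fourier_comp_add_right_eq, hpK, Complex.real_smul]
  push_cast
  ring

lemma tendsto_charFun_smoothedMeasure [SFinite ν] (hw : 0 < w)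
    (hint : ∀ σ, A < σ → Integrable (fun u ↦ Real.exp (-(σ * u))) ν)
    (hG : ContDiffOn ℝ 1 G rightHalfPlane) (hH : ContDiffOn ℝ 1 H rightHalfPlane)
    (hlaplace : ∀ z : ℂ, 0 < z.re →
      ∫ u : ℝ, Complex.exp (-((A + z) * u)) ∂ν = G z * z ^ (-w : ℂ) + H z)
    {p : SchwartzMap ℝ ℂ} (hp : HasCompactSupport p)
    (hpK : ∀ y, 𝓕 (p : ℝ → ℂ) y = K y) (hK_nonneg : ∀ y, 0 ≤ K y) (t : ℝ) :
    Tendsto (fun x ↦ charFun (smoothedMeasure ν A w K x) t) atTop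
      (𝓝 (G 0 / Real.Gamma w * p (t / (2 * π)))) := by
  have hshift_smooth : ContDiff ℝ 1 fun s ↦ p (s + t / (2 * π)) :=
    (p.smooth 1).comp (contDiff_id.add contDiff_const)
  have hshift_compact : HasCompactSupport fun s ↦ p (s + t / (2 * π)) :=
    hp.comp_homeomorph (Homeomorph.addRight _)
  have hlim := (tendsto_rpow_mul_fourier_mul_verticalLine hw hG hH hlaplace hshift_smooth
    hshift_compact).const_mul (Real.exp 1 : ℂ)
  refine (hlim.congr' ?_).trans_eq (congrArg 𝓝 ?_)
  · filter_upwards [eventually_gt_atTop 0] with x hx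
    rw [charFun_smoothedMeasure hx (hint _ (lt_add_of_pos_right A (inv_pos.2 hx))) hpK hK_nonneg]
  · rw [Real.exp_neg, zero_add]
    push_cast
    field_simp

open scoped ComplexOrder in
lemma exists_nonneg_ofReal_eq_of_tendsto_charFun {ι : Type*} {L : Filter ι} [L.NeBot]
    {νs : ι → Measure ℝ} {c : ℝ} (hc : 0 < c) {z : ℂ}
    (h : Tendsto (fun i ↦ charFun (νs i) 0) L (𝓝 (z * c))) : ∃ C : ℝ, 0 ≤ C ∧ z = C := by
  have hzc : 0 ≤ z * c := ge_of_tendsto' h fun i ↦ by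
    rw [charFun_zero]
    exact_mod_cast measureReal_nonneg
  have hz : 0 ≤ z := by
    have hc' : (0 : ℂ) ≤ (c⁻¹ : ℝ) := by exact_mod_cast (inv_pos.2 hc).le
    simpa [mul_assoc, hc.ne'] using mul_nonneg hzc hc'
  exact ⟨z.re, (Complex.nonneg_iff.1 hz).1, Complex.ext rfl (Complex.nonneg_iff.1 hz).2.symm⟩

lemma charFun_withDensity_of_fourier_eq_ofReal {C : ℝ} (hC : 0 ≤ C) {p : SchwartzMap ℝ ℂ}
    (hpK : ∀ y, 𝓕 (p : ℝ → ℂ) y = K y) (hK_nonneg : ∀ y, 0 ≤ K y) (t : ℝ) :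
    charFun (volume.withDensity fun y ↦ ENNReal.ofReal (C * K y)) t = C * p (t / (2 * π)) := by
  have hK := continuous_of_fourier_eq_ofReal hpK
  rw [charFun_apply_real, integral_withDensity_eq_integral_toReal_smul (by fun_prop) (by simp),
    ← integral_cexp_mul_of_fourier_eq_ofReal hpK, ← integral_const_mul]
  refine integral_congr_ae (.of_forall fun y ↦ ?_)
  simp only [ENNReal.toReal_ofReal (mul_nonneg hC (hK_nonneg y)), Complex.real_smul]
  push_cast
  ring

lemma tendsto_setIntegral_smoothedMeasure {C : ℝ} (hC : 0 ≤ C)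
    (hint : ∀ σ, A < σ → Integrable (fun u ↦ Real.exp (-(σ * u))) ν)
    {p : SchwartzMap ℝ ℂ} (hpK : ∀ y, 𝓕 (p : ℝ → ℂ) y = K y) (hK_nonneg : ∀ y, 0 ≤ K y)
    (hlim : ∀ t, Tendsto (fun x ↦ charFun (smoothedMeasure ν A w K x) t) atTop
      (𝓝 (C * p (t / (2 * π)))))
    {ρ : ℝ → ℝ} (hρ : Continuous ρ) (hρ_nonneg : ∀ y, 0 ≤ ρ y) {M : ℝ} (hρ_le : ∀ y, ρ y ≤ M)
    {E : Set ℝ} (hE : volume (frontier E) = 0) :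
    Tendsto (fun x ↦ ∫ y in E, ρ y ∂smoothedMeasure ν A w K x) atTop
      (𝓝 (C * ∫ y in E, K y * ρ y)) := by
  have hK := continuous_of_fourier_eq_ofReal hpK
  have hCK : Integrable fun y ↦ C * K y := (integrable_of_fourier_eq_ofReal hpK).const_mul C
  let ν₀ : FiniteMeasure ℝ := ⟨volume.withDensity fun y ↦ ENNReal.ofReal (C * K y),
    isFiniteMeasure_withDensity_ofReal hCK.2⟩
  let νs : Ioi (0 : ℝ) → FiniteMeasure ℝ := fun x ↦ ⟨smoothedMeasure ν A w K x,
    isFiniteMeasure_smoothedMeasure (hint _ (lt_add_of_pos_right A (inv_pos.2 x.2))) hK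
      (norm_le_integral_norm_of_fourier_eq_ofReal hpK)⟩
  have hweak : Tendsto νs atTop (𝓝 ν₀) := by
    have : (atTop : Filter (Ioi (0 : ℝ))).IsCountablyGenerated := by
      rw [atTop_Ioi_eq]
      infer_instance
    refine tendsto_finiteMeasure_of_tendsto_charFun fun t ↦ ?_
    rw [show charFun (ν₀ : Measure ℝ) t = _ from
      charFun_withDensity_of_fourier_eq_ofReal hC hpK hK_nonneg t]
    exact tendsto_comp_val_Ioi_atTop.2 (hlim t)
  have hρ_bdd (y : ℝ) : ‖ρ y‖ ≤ M := by
    rw [Real.norm_of_nonneg (hρ_nonneg y)]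
    exact hρ_le y
  have h := tendsto_setIntegral_of_null_frontier hweak
    (BoundedContinuousFunction.ofNormedAddCommGroup ρ hρ M hρ_bdd).nnrealPart
    (withDensity_absolutelyContinuous _ _ hE)
  simp only [BoundedContinuousFunction.nnrealPart_coeFn_eq, Function.comp_apply,
    BoundedContinuousFunction.coe_ofNormedAddCommGroup, Real.coe_toNNReal _ (hρ_nonneg _)] at h
  refine (tendsto_comp_val_Ioi_atTop.1 h).trans_eq (congrArg 𝓝 ?_)
  change ∫ y in E, ρ y ∂volume.withDensity _ = _
  rw [restrict_withDensity' E, integral_withDensity_eq_integral_toReal_smul (by fun_prop) (by simp),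
    ← integral_const_mul]
  refine integral_congr_ae (.of_forall fun y ↦ ?_)
  simp only [ENNReal.toReal_ofReal (mul_nonneg hC (hK_nonneg y)), smul_eq_mul, mul_assoc]

lemma setIntegral_exp_neg_div_mul_smoothedMeasure (hK : Continuous K) (hK_pos : ∀ y, 0 < K y)
    (hx : 0 < x) :
    ∫ y in Ici 0, Real.exp (-(y / x)) * (Real.exp (-(A * |y|)) / K y) ∂smoothedMeasure ν A w K x =
      x ^ (1 - w) * Real.exp (-(A * x)) * ν.real (Iic x) := by
  rw [← integral_indicator measurableSet_Ici,
    integral_smoothedMeasure hK (fun y ↦ (hK_pos y).le) hx]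
  have hindicator (u : ℝ) :
      (x ^ (1 - w) * Real.exp 1 * Real.exp (-((A + x⁻¹) * u)) * K (x - u)) •
        (Ici (0 : ℝ)).indicator
          (fun y ↦ Real.exp (-(y / x)) * (Real.exp (-(A * |y|)) / K y)) (x - u) =
      (Iic x).indicator (fun _ ↦ x ^ (1 - w) * Real.exp (-(A * x))) u := by
    by_cases hu : u ≤ x
    · rw [indicator_of_mem (by simpa using hu), indicator_of_mem (by simpa using hu),
        abs_of_nonneg (sub_nonneg.2 hu)]
      have hexp : Real.exp (-(A * x)) = Real.exp 1 * Real.exp (-((A + x⁻¹) * u)) *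
          (Real.exp (-((x - u) / x)) * Real.exp (-(A * (x - u)))) := by
        simp only [← Real.exp_add]
        congr 1
        field_simp
        ring
      have := (hK_pos (x - u)).ne'
      rw [hexp, smul_eq_mul]
      field_simp
    · rw [indicator_of_notMem (by simpa using hu), indicator_of_notMem (by simpa using hu),
        smul_zero]
  simp only [hindicator]
  rw [integral_indicator_const _ measurableSet_Iic, smul_eq_mul, mul_comm]

lemma abs_setIntegral_exp_neg_div_mul_sub_le {μ : Measure ℝ} [IsFiniteMeasure μ] {ρ : ℝ → ℝ}
    (hρ : IntegrableOn ρ (Ici 0) μ) {M : ℝ} (hρ_nonneg : ∀ y, 0 ≤ ρ y)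
    (hM : ∀ y, 0 ≤ y → y * ρ y ≤ M) (hx : 0 < x) :
    |(∫ y in Ici 0, Real.exp (-(y / x)) * ρ y ∂μ) - ∫ y in Ici 0, ρ y ∂μ| ≤
      M / x * μ.real (Ici 0) := by
  have hdamped : IntegrableOn (fun y ↦ Real.exp (-(y / x)) * ρ y) (Ici 0) μ := by
    refine hρ.bdd_mul (c := 1) (by fun_prop) ?_
    filter_upwards [ae_restrict_mem measurableSet_Ici] with y hy
    have : 0 ≤ y / x := div_nonneg hy hx.le
    simpa using this
  rw [← integral_sub hdamped hρ, ← Real.norm_eq_abs]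
  refine norm_setIntegral_le_of_norm_le_const (measure_lt_top _ _) fun y hy ↦ ?_
  have hle : 1 - Real.exp (-(y / x)) ≤ y / x := by linarith [Real.add_one_le_exp (-(y / x))]
  have hexp : Real.exp (-(y / x)) ≤ 1 := by
    simpa using div_nonneg hy hx.le
  calc ‖Real.exp (-(y / x)) * ρ y - ρ y‖
      = (1 - Real.exp (-(y / x))) * ρ y := by
        rw [norm_sub_rev, ← one_sub_mul, Real.norm_of_nonneg
          (mul_nonneg (sub_nonneg.2 hexp) (hρ_nonneg y))]
    _ ≤ y / x * ρ y := by gcongr; exact hρ_nonneg y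
    _ = y * ρ y / x := by ring
    _ ≤ M / x := by gcongr; exact hM y hy

lemma tendsto_setIntegral_exp_neg_div_mul {μ : ℝ → Measure ℝ}
    (hμ : ∀ x, 0 < x → IsFiniteMeasure (μ x)) {ρ : ℝ → ℝ} {M m ℓ : ℝ} (hρ : Continuous ρ)
    (hρ_nonneg : ∀ y, 0 ≤ ρ y) (hρ_le : ∀ y, ρ y ≤ M) (hM : ∀ y, 0 ≤ y → y * ρ y ≤ M)
    (hmass : Tendsto (fun x ↦ (μ x).real (Ici 0)) atTop (𝓝 m))
    (hlim : Tendsto (fun x ↦ ∫ y in Ici 0, ρ y ∂μ x) atTop (𝓝 ℓ)) :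
    Tendsto (fun x ↦ ∫ y in Ici 0, Real.exp (-(y / x)) * ρ y ∂μ x) atTop (𝓝 ℓ) := by
  have herr : Tendsto (fun x ↦ M / x * (μ x).real (Ici 0)) atTop (𝓝 0) := by
    simpa using (tendsto_const_nhds.div_atTop tendsto_id).mul hmass
  suffices hdiff : Tendsto (fun x ↦ (∫ y in Ici 0, Real.exp (-(y / x)) * ρ y ∂μ x) -
      ∫ y in Ici 0, ρ y ∂μ x) atTop (𝓝 0) by simpa using hdiff.add hlim
  refine squeeze_zero_norm' ?_ herr
  filter_upwards [eventually_gt_atTop 0] with x hx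
  have := hμ x hx
  have hρ_int : Integrable ρ (μ x) := .of_bound (by fun_prop) M (.of_forall fun y ↦ by
    rw [Real.norm_of_nonneg (hρ_nonneg y)]
    exact hρ_le y)
  exact abs_setIntegral_exp_neg_div_mul_sub_le hρ_int.integrableOn hρ_nonneg hM hx

lemma exp_neg_mul_abs_div_le {c : ℝ} (hc : 0 < c)
    (hK : ∀ y, c * Real.exp (-(A / 2 * |y|)) ≤ K y) (y : ℝ) :
    Real.exp (-(A * |y|)) / K y ≤ c⁻¹ * Real.exp (-(A / 2 * |y|)) := by
  rw [div_le_iff₀ ((by positivity : 0 < c * Real.exp (-(A / 2 * |y|))).trans_le (hK y))]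
  calc Real.exp (-(A * |y|))
      = c⁻¹ * Real.exp (-(A / 2 * |y|)) * (c * Real.exp (-(A / 2 * |y|))) := by
        rw [mul_mul_mul_comm, inv_mul_cancel₀ hc.ne', one_mul, ← Real.exp_add]
        ring_nf
    _ ≤ c⁻¹ * Real.exp (-(A / 2 * |y|)) * K y := by gcongr; exact hK y

lemma mul_exp_neg_mul_le_inv {b : ℝ} (hb : 0 < b) (y : ℝ) : y * Real.exp (-(b * y)) ≤ b⁻¹ := by
  rw [Real.exp_neg, ← div_eq_mul_inv, div_le_iff₀ (Real.exp_pos _), inv_mul_eq_div,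
    le_div_iff₀ hb, mul_comm]
  linarith [Real.add_one_le_exp (b * y)]

lemma exists_bound_exp_neg_mul_abs_div (hA : 0 < A) {c : ℝ} (hc : 0 < c)
    (hK : ∀ y, c * Real.exp (-(A / 2 * |y|)) ≤ K y) :
    ∃ M, (∀ y, Real.exp (-(A * |y|)) / K y ≤ M) ∧
      ∀ y, 0 ≤ y → y * (Real.exp (-(A * |y|)) / K y) ≤ M := by
  refine ⟨c⁻¹ * max 1 (A / 2)⁻¹, fun y ↦ ?_, fun y hy ↦ ?_⟩
  · refine (exp_neg_mul_abs_div_le hc hK y).trans ?_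
    gcongr
    refine le_max_of_le_left (Real.exp_le_one_iff.2 ?_)
    rw [Left.neg_nonpos_iff]
    positivity
  · calc y * (Real.exp (-(A * |y|)) / K y)
        ≤ y * (c⁻¹ * Real.exp (-(A / 2 * |y|))) := by
          gcongr
          exact exp_neg_mul_abs_div_le hc hK y
      _ = c⁻¹ * (y * Real.exp (-(A / 2 * y))) := by rw [abs_of_nonneg hy]; ring
      _ ≤ c⁻¹ * max 1 (A / 2)⁻¹ := by
          gcongr
          exact (mul_exp_neg_mul_le_inv (half_pos hA) y).trans (le_max_right _ _)

lemma tendsto_measureReal_Iic_of_tendsto_charFun (hA : 0 < A) {C c : ℝ} (hC : 0 ≤ C)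
    (hint : ∀ σ, A < σ → Integrable (fun u ↦ Real.exp (-(σ * u))) ν)
    {p : SchwartzMap ℝ ℂ} (hpK : ∀ y, 𝓕 (p : ℝ → ℂ) y = K y) (hc : 0 < c)
    (hK_lower : ∀ y, c * Real.exp (-(A / 2 * |y|)) ≤ K y)
    (hlim : ∀ t, Tendsto (fun x ↦ charFun (smoothedMeasure ν A w K x) t) atTop
      (𝓝 (C * p (t / (2 * π))))) :
    Tendsto (fun x ↦ x ^ (1 - w) * Real.exp (-(A * x)) * ν.real (Iic x)) atTop (𝓝 (C / A)) := by
  have hK := continuous_of_fourier_eq_ofReal hpK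
  have hK_pos (y : ℝ) : 0 < K y := (by positivity : 0 < c * _).trans_le (hK_lower y)
  have hρ : Continuous fun y ↦ Real.exp (-(A * |y|)) / K y :=
    Continuous.div (by fun_prop) hK fun y ↦ (hK_pos y).ne'
  have hρ_nonneg (y : ℝ) : 0 ≤ Real.exp (-(A * |y|)) / K y :=
    div_nonneg (Real.exp_nonneg _) (hK_pos y).le
  obtain ⟨M, hρ_le, hM⟩ := exists_bound_exp_neg_mul_abs_div hA hc hK_lower
  have hfrontier : volume (frontier (Ici (0 : ℝ))) = 0 := by simp
  have hweak {ρ : ℝ → ℝ} {M : ℝ} := tendsto_setIntegral_smoothedMeasure hC hint hpK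
    (fun y ↦ (hK_pos y).le) hlim (ρ := ρ) (M := M) (hE := hfrontier)
  have hmass := hweak (ρ := fun _ ↦ 1) continuous_const (fun _ ↦ zero_le_one) fun _ ↦ le_rfl
  simp only [setIntegral_const, smul_eq_mul, mul_one] at hmass
  have hdamped := tendsto_setIntegral_exp_neg_div_mul
    (fun x hx ↦ isFiniteMeasure_smoothedMeasure (hint _ (lt_add_of_pos_right A (inv_pos.2 hx))) hK
      (norm_le_integral_norm_of_fourier_eq_ofReal hpK))
    hρ hρ_nonneg hρ_le hM hmass (hweak hρ hρ_nonneg hρ_le)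
  refine (hdamped.congr' ?_).trans_eq (congrArg 𝓝 ?_)
  · filter_upwards [eventually_gt_atTop 0] with x hx
    exact setIntegral_exp_neg_div_mul_smoothedMeasure hK hK_pos hx
  · have hcancel : EqOn (fun y ↦ K y * (Real.exp (-(A * |y|)) / K y)) (fun y ↦ Real.exp (-A * y))
        (Ici 0) := fun y hy ↦ by
      have := (hK_pos y).ne'
      simp only [abs_of_nonneg (mem_Ici.1 hy)]
      field_simp
    rw [setIntegral_congr_fun measurableSet_Ici hcancel, integral_Ici_eq_integral_Ioi,
      integral_exp_mul_Ioi (neg_lt_zero.2 hA)]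
    simp [div_eq_mul_inv]

end SmoothedMeasure

theorem tendsto_measureReal_Iic_of_laplace [SFinite ν] (hA : 0 < A) (hw : 0 < w)
    (hint : ∀ σ, A < σ → Integrable (fun u ↦ Real.exp (-(σ * u))) ν)
    (hG : ContDiffOn ℝ 1 G rightHalfPlane) (hH : ContDiffOn ℝ 1 H rightHalfPlane)
    (hlaplace : ∀ z : ℂ, 0 < z.re →
      ∫ u : ℝ, Complex.exp (-((A + z) * u)) ∂ν = G z * z ^ (-w : ℂ) + H z) :
    Tendsto (fun x : ℝ ↦ ((x ^ (1 - w) * Real.exp (-(A * x)) * ν.real (Iic x) : ℝ) : ℂ)) atTop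
      (𝓝 (G 0 / (A * Real.Gamma w))) := by
  obtain ⟨p, K, c, hp, hpK, hc, hK_lower⟩ := exists_schwartzMap_exp_le_fourier (half_pos hA)
  have hK_pos (y : ℝ) : 0 < K y := (by positivity : 0 < c * _).trans_le (hK_lower y)
  have hlim := tendsto_charFun_smoothedMeasure hw hint hG hH hlaplace hp hpK fun y ↦ (hK_pos y).le
  have hp0 : p 0 = (∫ y, K y : ℝ) := by
    simpa [integral_complex_ofReal] using (integral_cexp_mul_of_fourier_eq_ofReal hpK 0).symm
  have hintegral_pos : 0 < ∫ y, K y := by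
    rw [integral_pos_iff_support_of_nonneg (fun y ↦ (hK_pos y).le)
      (integrable_of_fourier_eq_ofReal hpK), Function.support_eq_univ fun y ↦ (hK_pos y).ne']
    simp
  obtain ⟨C, hC, hGC⟩ : ∃ C : ℝ, 0 ≤ C ∧ G 0 / Real.Gamma w = C :=
    exists_nonneg_ofReal_eq_of_tendsto_charFun hintegral_pos (by simpa [hp0] using hlim 0)
  rw [hGC] at hlim
  have hreal := tendsto_measureReal_Iic_of_tendsto_charFun hA hC hint hpK hc hK_lower hlim
  refine ((Complex.continuous_ofReal.tendsto _).comp hreal).trans_eq (congrArg 𝓝 ?_)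
  rw [Complex.ofReal_div, ← hGC, div_div, mul_comm (A : ℂ)]

end Laplace

/-! ### Dirichlet series as Laplace transforms -/

section DirichletSeries

variable {a : ℕ → ℝ}

/-- The measure `∑ a n δ_{log n}`, whose Laplace transform is the Dirichlet series `∑ a n n ^ (-s)`.
Since `Real.log 0 = 0`, this interpretation requires `a 0 = 0`. -/
noncomputable def dirichletMeasure (a : ℕ → ℝ) : Measure ℝ :=
  .sum fun n ↦ ENNReal.ofReal (a n) • .dirac (Real.log n)

instance : SFinite (dirichletMeasure a) := by
  unfold dirichletMeasure
  infer_instance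

lemma integral_dirichletMeasure (hnn : ∀ n, 0 ≤ a n) {E : Type*} [NormedAddCommGroup E]
    [NormedSpace ℝ E] [FiniteDimensional ℝ E] (f : ℝ → E) :
    ∫ u, f u ∂dirichletMeasure a = ∑' n, a n • f (Real.log n) := by
  simp [dirichletMeasure, integral_sum_dirac, ENNReal.toReal_ofReal, hnn]

lemma mul_natCast_cpow_neg (ha0 : a 0 = 0) (n : ℕ) (s : ℂ) :
    a n * (n : ℂ) ^ (-s) = a n * Complex.exp (-(s * Real.log n)) := by
  obtain rfl | hn := eq_or_ne n 0
  · simp [ha0]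
  · rw [Complex.cpow_def_of_ne_zero (by exact_mod_cast hn), Complex.natCast_log]
    ring_nf

lemma integral_cexp_dirichletMeasure (hnn : ∀ n, 0 ≤ a n) (ha0 : a 0 = 0) (s : ℂ) :
    ∫ u : ℝ, Complex.exp (-(s * u)) ∂dirichletMeasure a = ∑' n : ℕ, a n * (n : ℂ) ^ (-s) := by
  simp only [integral_dirichletMeasure hnn, Complex.real_smul, mul_natCast_cpow_neg ha0]

lemma integrable_exp_dirichletMeasure (hnn : ∀ n, 0 ≤ a n) (ha0 : a 0 = 0) {σ : ℝ}
    (hσ : Summable fun n : ℕ ↦ ‖a n * (n : ℂ) ^ (-σ : ℂ)‖) :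
    Integrable (fun u ↦ Real.exp (-(σ * u))) (dirichletMeasure a) := by
  refine integrable_sum_dirac (by simp) (hσ.congr fun n ↦ ?_)
  rw [mul_natCast_cpow_neg ha0, norm_mul, Complex.norm_of_nonneg (hnn n), Complex.norm_exp,
    ENNReal.toReal_ofReal (hnn n), Real.norm_of_nonneg (Real.exp_nonneg _),
    ← Complex.ofReal_mul, ← Complex.ofReal_neg, Complex.ofReal_re]

lemma measureReal_dirichletMeasure_Iic_log (hnn : ∀ n, 0 ≤ a n) (ha0 : a 0 = 0) {X : ℝ}
    (hX : 0 < X) :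
    (dirichletMeasure a).real (Iic (Real.log X)) = ∑ n ∈ Finset.Icc 1 ⌊X⌋₊, a n := by
  have hmem {n : ℕ} (hn : n ≠ 0) :
      Real.log n ∈ Iic (Real.log X) ↔ n ∈ Finset.Icc 1 ⌊X⌋₊ := by
    have hn' : (0 : ℝ) < n := by positivity
    rw [mem_Iic, Real.log_le_log_iff hn' hX, Finset.mem_Icc, Nat.le_floor_iff hX.le,
      Nat.one_le_iff_ne_zero]
    exact (and_iff_right hn).symm
  rw [← integral_indicator_one measurableSet_Iic, integral_dirichletMeasure hnn,
    tsum_eq_sum (s := Finset.Icc 1 ⌊X⌋₊) fun n hn ↦ ?_]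
  · refine Finset.sum_congr rfl fun n hn ↦ ?_
    have hn0 : n ≠ 0 := Nat.one_le_iff_ne_zero.1 (Finset.mem_Icc.1 hn).1
    rw [indicator_of_mem ((hmem hn0).2 hn), Pi.one_apply, smul_eq_mul, mul_one]
  · obtain rfl | hn0 := eq_or_ne n 0
    · rw [ha0, zero_smul]
    · rw [indicator_of_notMem (mt (hmem hn0).1 hn), smul_zero]

end DirichletSeries

lemma contDiffOn_real_of_analyticOn_setOf_le_re {c : ℝ} {g : ℂ → ℂ}
    (hg : AnalyticOn ℂ g {s | c ≤ s.re}) : ContDiffOn ℝ 1 g {s | c ≤ s.re} :=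
  (hg.contDiffOn (uniqueDiffOn_setOf_le_re c).mono_field).restrict_scalars ℝ

end DelangeIkehara

open DelangeIkehara Set in
theorem stmt_6_general {a : ℕ → ℝ} (hnn : ∀ n, 0 ≤ a n) (ha0 : a 0 = 0) {A w : ℝ} (hA : 0 < A)
    (hw : 0 < w) {g h : ℂ → ℂ}
    (hconv : ∀ s : ℂ, A < s.re → Summable fun n : ℕ ↦ ‖(a n : ℂ) * (n : ℂ) ^ (-s)‖)
    (hg : ContDiffOn ℝ 1 g {s | A ≤ s.re}) (hh : ContDiffOn ℝ 1 h {s | A ≤ s.re})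
    (heq : ∀ s : ℂ, A < s.re →
      ∑' n : ℕ, (a n : ℂ) * (n : ℂ) ^ (-s) = g s * (s - A) ^ (-w : ℂ) + h s) :
    Tendsto (fun X : ℝ ↦ ((∑ n ∈ Finset.Icc 1 ⌊X⌋₊, a n : ℝ) : ℂ) /
        ((X ^ A * Real.log X ^ (w - 1) : ℝ) : ℂ)) atTop
      (nhds (g A / (A * Real.Gamma w))) := by
  have hshift : MapsTo (fun z : ℂ ↦ A + z) rightHalfPlane {s | A ≤ s.re} := fun z hz ↦ by
    simpa using hz
  have htranslate : ContDiff ℝ 1 fun z : ℂ ↦ A + z := contDiff_const.add contDiff_id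
  have hlim := tendsto_measureReal_Iic_of_laplace (ν := dirichletMeasure a) hA hw
    (fun σ hσ ↦ integrable_exp_dirichletMeasure hnn ha0 (hconv σ hσ))
    (hg.comp htranslate.contDiffOn hshift) (hh.comp htranslate.contDiffOn hshift)
    fun z hz ↦ by
      rw [integral_cexp_dirichletMeasure hnn ha0, heq _ (by simpa using hz), add_sub_cancel_left]
      rfl
  rw [Function.comp_apply, add_zero] at hlim
  refine (hlim.comp Real.tendsto_log_atTop).congr' ?_
  filter_upwards [eventually_gt_atTop 1] with X hX
  have hX0 : 0 < X := one_pos.trans hX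
  rw [Function.comp_apply, measureReal_dirichletMeasure_Iic_log hnn ha0 hX0, ← Complex.ofReal_div,
    Real.exp_neg, mul_comm A, ← Real.rpow_def_of_pos hX0, ← neg_sub w,
    Real.rpow_neg (Real.log_pos hX).le, ← mul_inv_rev, inv_mul_eq_div]

/-- The Délange–Ikehara Tauberian theorem: if `f(s) = ∑ aₙ n^{-s}` has nonnegative
coefficients, converges for `Re s > a > 0`, and on its domain of convergence
`f(s) = g(s)(s-a)^{-w} + h(s)` with `g, h` holomorphic on the closed half-plane
`Re s ≥ a`, `g(a) ≠ 0` and `w > 0`, then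
`∑_{n ≤ X} aₙ ∼ (g(a)/(a·Γ(w)))·X^a·(log X)^{w-1}` as `X → ∞`. -/
theorem stmt_6 (a : ℕ → ℝ) (hnn : ∀ n, 0 ≤ a n) (ha0 : a 0 = 0)
    (A : ℝ) (hA : 0 < A)
    (f g h : ℂ → ℂ) (w : ℝ) (hw : 0 < w)
    (hconv : ∀ s : ℂ, A < s.re → Summable fun n : ℕ => ‖(a n : ℂ) * (n : ℂ) ^ (-s)‖)
    (hf : ∀ s : ℂ, A < s.re → f s = ∑' n : ℕ, (a n : ℂ) * (n : ℂ) ^ (-s))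
    (hg : AnalyticOn ℂ g {s : ℂ | A ≤ s.re})
    (hh : AnalyticOn ℂ h {s : ℂ | A ≤ s.re})
    (hgA : g (A : ℂ) ≠ 0)
    (heq : ∀ s : ℂ, A < s.re → f s = g s * (s - (A : ℂ)) ^ (-(w : ℂ)) + h s) :
    Tendsto (fun X : ℝ =>
        (((∑ n ∈ Finset.Icc 1 ⌊X⌋₊, a n : ℝ) : ℂ) /
          (((X ^ A * Real.log X ^ (w - 1) : ℝ)) : ℂ)))
      atTop (nhds (g (A : ℂ) / ((A : ℂ) * (Real.Gamma w : ℂ)))) := by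
  exact stmt_6_general hnn ha0 hA hw hconv
    (DelangeIkehara.contDiffOn_real_of_analyticOn_setOf_le_re hg)
    (DelangeIkehara.contDiffOn_real_of_analyticOn_setOf_le_re hh)
    fun s hs ↦ (hf s hs).symm.trans (heq s hs)
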